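/- Let R be the (unique) Richman cost function on D. Then R(v) is a rational number for every vertex v. -/

import Mathlib

open Relation Filter

variable {V : Type*}

/-- `fplus E f v` is `f⁺(v) = sup_{w ∈ S(v)} f(w)`, where `S(v)` is the set of successors of `v`. -/
noncomputable def fplus (E : V → V → Prop) (f : V → ℝ) (v : V) : ℝ :=
  sSup (f '' {w | E v w})

/-- `fminus E f v` is `f⁻(v) = inf_{u ∈ S(v)} f(u)`. -/
noncomputable def fminus (E : V → V → Prop) (f : V → ℝ) (v : V) : ℝ :=
  sInf (f '' {w | E v w})

/-- A Richman cost function: `R : V → [0,1]`, `R(b) = 0`, `R(r) = 1`, and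
`R(v) = (R⁺(v) + R⁻(v))/2` for every `v ∉ {b, r}`. -/
def IsRichman (E : V → V → Prop) (b r : V) (R : V → ℝ) : Prop :=
  (∀ v, R v ∈ Set.Icc (0 : ℝ) 1) ∧ R b = 0 ∧ R r = 1 ∧
    ∀ v, v ≠ b → v ≠ r → R v = (fplus E R v + fminus E R v) / 2

/-!
If some cost were irrational, a `ℚ`-linear `φ : ℝ → ℚ` with `φ 1 = 0` would be nonzero on it.
Order `ℝ` lexicographically by `(φ x, x)`, which is again compatible with addition. At a vertex
whose cost is largest in this order, the cost is the mean of two costs that are no larger, hence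
equal to it. These two are the extreme costs of the successors in the usual order, so every
successor has the same cost. Following a path to the boundary, where `φ` vanishes, shows that `φ`
is at most `0` on all costs; the same holds for `-φ`, a contradiction.
-/

section Successors

variable {E : V → V → Prop} {f : V → ℝ} {v w : V}

lemma fplus_mem_image (hfin : (f '' {w | E v w}).Finite) (hvw : E v w) :
    fplus E f v ∈ f '' {w | E v w} :=
  (Set.Nonempty.image f ⟨w, hvw⟩).csSup_mem hfin

lemma fminus_mem_image (hfin : (f '' {w | E v w}).Finite) (hvw : E v w) :
    fminus E f v ∈ f '' {w | E v w} :=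
  (Set.Nonempty.image f ⟨w, hvw⟩).csInf_mem hfin

lemma le_fplus (hbdd : BddAbove (f '' {w | E v w})) (hvw : E v w) : f w ≤ fplus E f v :=
  le_csSup hbdd (Set.mem_image_of_mem f hvw)

lemma fminus_le (hbdd : BddBelow (f '' {w | E v w})) (hvw : E v w) : fminus E f v ≤ f w :=
  csInf_le hbdd (Set.mem_image_of_mem f hvw)

end Successors

/-- Discrete `∞`-harmonicity off a boundary set `B`: the averaging equation of Richman cost
functions, with an arbitrary set of terminal vertices in place of `{b, r}` and no constraint on the
boundary values. -/
def IsInftyHarmonicOff (E : V → V → Prop) (B : Set V) (f : V → ℝ) : Prop :=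
  ∀ v ∉ B, f v = (fplus E f v + fminus E f v) / 2

lemma IsRichman.isInftyHarmonicOff {E : V → V → Prop} {b r : V} {R : V → ℝ}
    (hR : IsRichman E b r R) : IsInftyHarmonicOff E {b, r} R := fun v hv ↦ by
  simp only [Set.mem_insert_iff, Set.mem_singleton_iff, not_or] at hv
  exact hR.2.2.2 v hv.1 hv.2

lemma IsRichman.boundary_mem_of_one_mem {E : V → V → Prop} {b r : V} {R : V → ℝ}
    (hR : IsRichman E b r R) {W : Submodule ℚ ℝ} (hW : 1 ∈ W) :
    ∀ w ∈ ({b, r} : Set V), R w ∈ W := by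
  obtain ⟨-, hb, hr, -⟩ := hR
  simp [hb, hr, hW]

namespace IsInftyHarmonicOff

variable {E : V → V → Prop} {B : Set V} {f : V → ℝ}
  {G : Type*} [AddCommGroup G] [LinearOrder G] [IsOrderedAddMonoid G]

lemma eq_of_forall_le (hf : IsInftyHarmonicOff E B f) {v w : V}
    (hfin : (f '' {w | E v w}).Finite) {g : ℝ →+ G} (hg : Function.Injective g)
    (hmax : ∀ u, g (f u) ≤ g (f v)) (hv : v ∉ B) (hvw : E v w) : f w = f v := by
  obtain ⟨p, -, hp⟩ := fplus_mem_image hfin hvw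
  obtain ⟨q, -, hq⟩ := fminus_mem_image hfin hvw
  have hmean : f p + f q = f v + f v := by linarith [hf v hv]
  have hg_mean : g (f p) + g (f q) = g (f v) + g (f v) := by rw [← map_add, hmean, map_add]
  obtain ⟨hpv, hqv⟩ := (add_eq_add_iff_eq_and_eq (hmax p) (hmax q)).1 hg_mean
  apply le_antisymm
  · calc f w ≤ fplus E f v := le_fplus hfin.bddAbove hvw
      _ = f v := hp.symm.trans (hg hpv)
  · calc f v = fminus E f v := (hg hqv).symm.trans hq
      _ ≤ f w := fminus_le hfin.bddBelow hvw

lemma exists_mem_boundary_eq (hf : IsInftyHarmonicOff E B f)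
    (hfin : ∀ v, (f '' {w | E v w}).Finite) {g : ℝ →+ G} (hg : Function.Injective g)
    {v w : V} (hmax : ∀ u, g (f u) ≤ g (f v)) (hw : w ∈ B) (hvw : ReflTransGen E v w) :
    ∃ z ∈ B, f z = f v := by
  induction hvw using ReflTransGen.head_induction_on with
  | refl => exact ⟨w, hw, rfl⟩
  | @head v u hvu _ ih =>
    by_cases hv : v ∈ B
    · exact ⟨v, hv, rfl⟩
    · have huv : f u = f v := hf.eq_of_forall_le (hfin v) hg hmax hv hvu
      rw [huv] at ih
      exact ih hmax

lemma exists_mem_boundary_forall_le_of_injective [Nonempty V] (hf : IsInftyHarmonicOff E B f)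
    (hfin : (Set.range f).Finite) (hreach : ∀ v, ∃ w ∈ B, ReflTransGen E v w)
    {g : ℝ →+ G} (hg : Function.Injective g) : ∃ z ∈ B, ∀ u, g (f u) ≤ g (f z) := by
  obtain ⟨_, ⟨v, rfl⟩, hmax⟩ := Set.exists_max_image _ g hfin (Set.range_nonempty f)
  rw [Set.forall_mem_range] at hmax
  obtain ⟨w, hw, hvw⟩ := hreach v
  have hsucc (u : V) : (f '' {w | E u w}).Finite := hfin.subset (Set.image_subset_range _ _)
  obtain ⟨z, hz, hzv⟩ := hf.exists_mem_boundary_eq hsucc hg hmax hw hvw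
  exact ⟨z, hz, hzv ▸ hmax⟩

lemma exists_mem_boundary_forall_le [Nonempty V] (hf : IsInftyHarmonicOff E B f)
    (hfin : (Set.range f).Finite) (hreach : ∀ v, ∃ w ∈ B, ReflTransGen E v w)
    (φ : ℝ →+ G) : ∃ z ∈ B, ∀ u, φ (f u) ≤ φ (f z) := by
  let g : ℝ →+ G ×ₗ ℝ := (toLexAddEquiv (G × ℝ)).toAddMonoidHom.comp (φ.prod (AddMonoidHom.id ℝ))
  have hg : Function.Injective g := fun _ _ h ↦ congrArg (fun y ↦ (ofLex y).2) h
  obtain ⟨z, hz, hmax⟩ := hf.exists_mem_boundary_forall_le_of_injective hfin hreach hg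
  exact ⟨z, hz, fun u ↦ Prod.Lex.monotone_fst _ _ (hmax u)⟩

end IsInftyHarmonicOff

theorem richman_rational_general (E : V → V → Prop) (B : Set V)
    (hreach : ∀ v, ∃ w ∈ B, ReflTransGen E v w) (R : V → ℝ) (hfin : (Set.range R).Finite)
    (hR : IsInftyHarmonicOff E B R) (W : Submodule ℚ ℝ) (hW : ∀ w ∈ B, R w ∈ W) (v : V) :
    R v ∈ W := by
  by_contra hv
  have : Nonempty V := ⟨v⟩
  obtain ⟨φ, hφv, hφW⟩ := Submodule.exists_le_ker_of_notMem hv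
  have hφB : ∀ w ∈ B, φ (R w) = 0 := fun w hw ↦ hφW (hW w hw)
  obtain ⟨z, hz, hle⟩ := hR.exists_mem_boundary_forall_le hfin hreach φ.toAddMonoidHom
  obtain ⟨z', hz', hge⟩ := hR.exists_mem_boundary_forall_le hfin hreach (-φ).toAddMonoidHom
  have hφv_le : φ (R v) ≤ 0 := (hle v).trans_eq (hφB z hz)
  have hφv_ge : -φ (R v) ≤ 0 := (hge v).trans_eq (by simp [hφB z' hz'])
  exact hφv (by linarith)

/-- Richman costs are rational numbers. -/
theorem richman_rational [Fintype V] [DecidableEq V] (E : V → V → Prop) (b r : V)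
    (hbr : b ≠ r)
    (hreach : ∀ v, ReflTransGen E v b ∨ ReflTransGen E v r)
    (R : V → ℝ) (hR : IsRichman E b r R) :
    ∀ v, ∃ q : ℚ, R v = (q : ℝ) := by
  intro v
  have hone : (1 : ℝ) ∈ (Algebra.linearMap ℚ ℝ).range := ⟨1, map_one (algebraMap ℚ ℝ)⟩
  obtain ⟨q, hq⟩ := richman_rational_general E {b, r} (by simpa using hreach) R
    (Set.finite_range R) hR.isInftyHarmonicOff _ (hR.boundary_mem_of_one_mem hone) v
  exact ⟨q, hq.symm⟩
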